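/- Let N > 0 and let m ≥ 1 be an integer. For every integer j ≥ 2m there exist a real number σ_{*,j} > 0 and an exponentially decaying sequence (c_p)_{p≥1} with c_1 = α_1 solving the MG eigenvalue recursion with constant shifts σ_p = σ_{*,j} (with frequencies k1 = j², k2 = j), such that σ_{*,j} ≥ j · m N²/(24 N⁴ m² + 2). In particular σ_{*,j} → ∞ as j → ∞, so the linearization of the non-diffusive MG equation around Θ_0 = sin(m x_3) possesses unstable eigenvalues of arbitrarily large magnitude. -/

import Mathlib

/-- The coefficients `α_p = 2(N⁴(mp)²(k1² + k2² + (mp)²) + k2⁴) / (m N² k2² (k1² + k2²))`. -/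
noncomputable def alphaMG (N : ℝ) (m : ℕ) (k1 k2 : ℤ) (p : ℕ) : ℝ :=
  2 * (N ^ 4 * ((m : ℝ) * (p : ℝ)) ^ 2
        * ((k1 : ℝ) ^ 2 + (k2 : ℝ) ^ 2 + ((m : ℝ) * (p : ℝ)) ^ 2) + (k2 : ℝ) ^ 4)
    / ((m : ℝ) * N ^ 2 * (k2 : ℝ) ^ 2 * ((k1 : ℝ) ^ 2 + (k2 : ℝ) ^ 2))

/-- A sequence `(c_p)_{p ≥ 1}` solves the MG eigenvalue recursion with shifts `(σ_p)` and
coefficients `(α_p)` if `σ_1 c_1 + c_2/α_2 = 0` and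
`σ_p c_p + c_{p+1}/α_{p+1} + c_{p−1}/α_{p−1} = 0` for all `p ≥ 2`. -/
def SolvesMGRecursion (α σ c : ℕ → ℝ) : Prop :=
  σ 1 * c 1 + c 2 / α 2 = 0 ∧
  ∀ p : ℕ, 2 ≤ p → σ p * c p + c (p + 1) / α (p + 1) + c (p - 1) / α (p - 1) = 0

/-- A sequence `(c_p)_{p ≥ 1}` decays exponentially in `p` if there are `C > 0` and
`λ ∈ (0,1)` with `|c_p| ≤ C λ^p` for all `p ≥ 1`. -/
def DecaysExponentially (c : ℕ → ℝ) : Prop :=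
  ∃ C : ℝ, 0 < C ∧ ∃ lam : ℝ, lam ∈ Set.Ioo (0 : ℝ) 1 ∧ ∀ p : ℕ, 1 ≤ p → |c p| ≤ C * lam ^ p

/-!
Writing `c_p = (-1)^{p+1} α_p d_p` turns the recursion with constant shift `σ` into the shooting
problem `d_{p+2} = σ α_{p+1} d_{p+1} - d_p`, `d_0 = 0`, `d_1 = 1`. The set of shifts for which
`d_p > 0` for all `p ≥ 1` is closed, contains all large `σ`, and consists of positive numbers
because `d_2 = σ α_1`. At its least element `d` can increase only finitely often: where `σ α ≥ 2`,
an increase of `d` perpetuates itself, hence survives a small decrease of `σ`, contradicting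
minimality. As `d` is eventually nonincreasing and `α_p → ∞`, the ratios
`α_{p+1} d_{p+1} / (α_p d_p) ≤ 2 / (σ α_p)` tend to zero, so `c` decays exponentially. Finally,
`d_3 > 0` gives `1 < σ² α_1 α_2 ≤ (σ α_2)²`, and `α_2` is of order `k2⁻²` as soon as
`k2⁴ ≤ k1² + k2²`, which holds for `k1 = j²`, `k2 = j`.
-/

open Filter Topology Asymptotics

theorem decaysExponentially_of_eventually_ratio_le {c : ℕ → ℝ} {r : ℝ} (hr : r ∈ Set.Ioo 0 1)
    (h : ∀ᶠ p in atTop, |c (p + 1)| ≤ r * |c p|) : DecaysExponentially c := by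
  obtain ⟨P, hP⟩ := eventually_atTop.1 h
  have geometric : ∀ p ≥ P, |c p| ≤ |c P| / r ^ P * r ^ p := by
    intro p hp
    induction p, hp using Nat.le_induction with
    | base => rw [div_mul_cancel₀ _ (pow_pos hr.1 P).ne']
    | succ p hp ih =>
      calc |c (p + 1)| ≤ r * |c p| := hP p hp
        _ ≤ r * (|c P| / r ^ P * r ^ p) := mul_le_mul_of_nonneg_left ih hr.1.le
        _ = |c P| / r ^ P * r ^ (p + 1) := by ring
  have isBigO : c =O[atTop] fun p => r ^ p :=
    .of_bound (|c P| / r ^ P) <| eventually_atTop.2 ⟨P, fun p hp => by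
      simpa [abs_of_pos hr.1] using geometric p hp⟩
  obtain ⟨C, hC, hbound⟩ := bound_of_isBigO_nat_atTop isBigO
  refine ⟨C, hC, r, hr, fun p _ => ?_⟩
  simpa [abs_of_pos hr.1] using hbound (pow_pos hr.1 p).ne'

/-- The sequence `d_p = (-1)^{p+1} c_p / α_p` attached to a solution `c` of the MG eigenvalue
recursion with constant shift `σ` and `c_1 = α_1`. It starts from the fictitious value `d_0 = 0`,
which absorbs the boundary equation at `p = 1`. -/
noncomputable def mgShooting (α : ℕ → ℝ) (σ : ℝ) : ℕ → ℝ
  | 0 => 0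
  | 1 => 1
  | n + 2 => σ * α (n + 1) * mgShooting α σ (n + 1) - mgShooting α σ n

section Shooting

variable {α : ℕ → ℝ} {σ : ℝ}

@[simp]
theorem mgShooting_zero : mgShooting α σ 0 = 0 := rfl

@[simp]
theorem mgShooting_one : mgShooting α σ 1 = 1 := rfl

theorem mgShooting_add_two (n : ℕ) :
    mgShooting α σ (n + 2) = σ * α (n + 1) * mgShooting α σ (n + 1) - mgShooting α σ n := rfl

theorem continuous_mgShooting (n : ℕ) : Continuous fun σ => mgShooting α σ n := by
  induction n using Nat.twoStepInduction with
  | zero => exact continuous_const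
  | one => exact continuous_const
  | more n ih₀ ih₁ =>
    simp only [mgShooting_add_two]
    fun_prop

theorem solvesMGRecursion_mgShooting (hα : ∀ p, α (p + 1) ≠ 0) :
    SolvesMGRecursion α (fun _ => σ) fun p => (-1) ^ (p + 1) * (α p * mgShooting α σ p) := by
  refine ⟨?_, fun p hp => ?_⟩
  · have hα₂ : α 2 ≠ 0 := hα 1
    simp only [mul_div_assoc, mul_div_cancel_left₀ _ hα₂, mgShooting_add_two 0,
      mgShooting_zero, zero_add]
    ring
  · obtain ⟨n, rfl⟩ := Nat.exists_eq_add_of_le' hp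
    simp only [Nat.add_succ_sub_one, mul_div_assoc, mul_div_cancel_left₀ _ (hα n),
      mul_div_cancel_left₀ _ (hα (n + 2)), mgShooting_add_two (n + 1)]
    ring

theorem mgShooting_pos_of_lt_succ {p : ℕ} (hσα : ∀ q > p, 2 ≤ σ * α q)
    (hp : 0 ≤ mgShooting α σ p) (hlt : mgShooting α σ p < mgShooting α σ (p + 1)) :
    ∀ q > p, 0 < mgShooting α σ q := by
  have increasing : ∀ q ≥ p,
      0 ≤ mgShooting α σ q ∧ mgShooting α σ q < mgShooting α σ (q + 1) := by
    intro q hq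
    induction q, hq using Nat.le_induction with
    | base => exact ⟨hp, hlt⟩
    | succ q hq ih =>
      have hpos : 0 < mgShooting α σ (q + 1) := ih.1.trans_lt ih.2
      have hdouble : 2 * mgShooting α σ (q + 1) ≤ σ * α (q + 1) * mgShooting α σ (q + 1) :=
        mul_le_mul_of_nonneg_right (hσα (q + 1) (by omega)) hpos.le
      exact ⟨hpos.le, by rw [mgShooting_add_two]; linarith [ih.2]⟩
  intro q hq
  obtain ⟨n, rfl⟩ := Nat.exists_eq_add_of_lt hq
  obtain ⟨hnonneg, hlt⟩ := increasing (p + n) (Nat.le_add_right p n)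
  exact hnonneg.trans_lt hlt

end Shooting

/-- The shifts `σ` for which the whole shooting sequence `d_1, d_2, …` stays positive. The
eigenvalue sought is the least element of this set. -/
def mgPositiveShifts (α : ℕ → ℝ) : Set ℝ :=
  {σ | ∀ p, 0 < mgShooting α σ (p + 1)}

section PositiveShifts

variable {α : ℕ → ℝ} {σ : ℝ}

theorem mgShooting_nonneg_of_mem (hσ : σ ∈ mgPositiveShifts α) (p : ℕ) :
    0 ≤ mgShooting α σ p := by
  cases p with
  | zero => exact le_rfl
  | succ p => exact (hσ p).le

theorem mem_mgPositiveShifts_iff_nonneg :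
    σ ∈ mgPositiveShifts α ↔ ∀ p, 0 ≤ mgShooting α σ p := by
  refine ⟨mgShooting_nonneg_of_mem, fun hnonneg p => ?_⟩
  induction p with
  | zero => exact one_pos
  | succ p ih =>
    refine (hnonneg (p + 2)).lt_of_ne' fun hzero => ?_
    have hneg : mgShooting α σ (p + 3) < 0 := by
      rw [mgShooting_add_two (p + 1), hzero]
      linarith
    exact hneg.not_ge (hnonneg (p + 3))

theorem isClosed_mgPositiveShifts : IsClosed (mgPositiveShifts α) := by
  have hInter : mgPositiveShifts α = ⋂ p, {σ | 0 ≤ mgShooting α σ p} := by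
    ext σ
    simp [mem_mgPositiveShifts_iff_nonneg]
  rw [hInter]
  exact isClosed_iInter fun p => isClosed_le continuous_const (continuous_mgShooting p)

theorem pos_of_mem_mgPositiveShifts (hα : 0 < α 1) (hσ : σ ∈ mgPositiveShifts α) : 0 < σ := by
  have h : 0 < σ * α 1 := by simpa [mgShooting_add_two 0] using hσ 1
  exact pos_of_mul_pos_left h hα.le

theorem one_lt_of_mem_mgPositiveShifts (hσ : σ ∈ mgPositiveShifts α) :
    1 < σ ^ 2 * (α 1 * α 2) := by
  have h : 0 < σ * α 2 * (σ * α 1) - 1 := by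
    simpa [mgShooting_add_two 0, mgShooting_add_two 1] using hσ 2
  linarith

theorem mem_mgPositiveShifts_of_two_le (h : ∀ p, 2 ≤ σ * α (p + 1)) : σ ∈ mgPositiveShifts α := by
  have hσα : ∀ q > 0, 2 ≤ σ * α q := fun q hq => by
    simpa only [Nat.sub_add_cancel hq] using h (q - 1)
  exact fun p => mgShooting_pos_of_lt_succ hσα le_rfl one_pos (p + 1) p.succ_pos

theorem mgPositiveShifts_nonempty (hα : ∀ p, 0 < α (p + 1)) (hlim : Tendsto α atTop atTop) :
    (mgPositiveShifts α).Nonempty := by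
  have hlim' : Tendsto (fun p => α (p + 1)) cofinite atTop := by
    rw [Nat.cofinite_eq_atTop]
    exact hlim.comp (tendsto_add_atTop_nat 1)
  obtain ⟨q, hmin⟩ := hlim'.exists_forall_le
  refine ⟨2 / α (q + 1), mem_mgPositiveShifts_of_two_le fun p => ?_⟩
  rw [div_mul_eq_mul_div, le_div_iff₀ (hα q)]
  linarith [hmin p]

theorem exists_isLeast_mgPositiveShifts (hα : ∀ p, 0 < α (p + 1))
    (hlim : Tendsto α atTop atTop) : ∃ σ, IsLeast (mgPositiveShifts α) σ :=
  ⟨_, isClosed_mgPositiveShifts.isLeast_csInf (mgPositiveShifts_nonempty hα hlim)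
    ⟨0, fun _ hσ => (pos_of_mem_mgPositiveShifts (hα 0) hσ).le⟩⟩

theorem mgPositiveShifts_mem_nhds {p : ℕ} (hσ : σ ∈ mgPositiveShifts α) (hσ₀ : 0 < σ)
    (hσα : ∀ q > p, 3 ≤ σ * α q) (hlt : mgShooting α σ p < mgShooting α σ (p + 1)) :
    mgPositiveShifts α ∈ 𝓝 σ := by
  have near : ∀ᶠ s in 𝓝 σ, 2 / 3 * σ < s := lt_mem_nhds (by linarith)
  have increase : ∀ᶠ s in 𝓝 σ, mgShooting α s p < mgShooting α s (p + 1) :=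
    (continuous_mgShooting p).continuousAt.eventually_lt
      (continuous_mgShooting (p + 1)).continuousAt hlt
  have initial : ∀ᶠ s in 𝓝 σ, ∀ q ∈ Finset.range (p + 1), 0 < mgShooting α s (q + 1) :=
    (eventually_all_finset _).2 fun q _ =>
      (continuous_mgShooting (q + 1)).continuousAt.eventually_const_lt (hσ q)
  filter_upwards [near, increase, initial] with s hs hinc hinit
  have hsα : ∀ q > p, 2 ≤ s * α q := fun q hq => by
    have hαq : 0 < α q := pos_of_mul_pos_right (three_pos.trans_le (hσα q hq)) hσ₀.le
    linarith [hσα q hq, mul_le_mul_of_nonneg_right hs.le hαq.le]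
  have hp : 0 ≤ mgShooting α s p := by
    cases p with
    | zero => exact le_rfl
    | succ p => exact (hinit p (by simp)).le
  intro q
  rcases lt_or_ge q p with hqp | hpq
  · exact hinit q (Finset.mem_range.2 (by omega))
  · exact mgShooting_pos_of_lt_succ hsα hp hinc (q + 1) (by omega)

theorem eventually_mgShooting_succ_le_of_isLeast (hα : 0 < α 1) (hlim : Tendsto α atTop atTop)
    (hσ : IsLeast (mgPositiveShifts α) σ) :
    ∀ᶠ p in atTop, mgShooting α σ (p + 1) ≤ mgShooting α σ p := by
  have hσ₀ := pos_of_mem_mgPositiveShifts hα hσ.1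
  obtain ⟨P, hP⟩ := eventually_atTop.1 ((hlim.const_mul_atTop hσ₀).eventually_ge_atTop 3)
  filter_upwards [eventually_ge_atTop P] with p hp
  by_contra! hlt
  have hnhds := mgPositiveShifts_mem_nhds hσ.1 hσ₀ (fun q hq => hP q (hp.trans hq.le)) hlt
  obtain ⟨s, hs, hsσ⟩ := nonempty_of_mem
    (inter_mem (mem_nhdsWithin_of_mem_nhds hnhds) (self_mem_nhdsWithin (s := Set.Iio σ)))
  exact (hσ.2 hs).not_gt hsσ

theorem eventually_mul_mgShooting_succ_le_of_isLeast (hα : 0 < α 1)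
    (hlim : Tendsto α atTop atTop) (hσ : IsLeast (mgPositiveShifts α) σ) :
    ∀ᶠ p in atTop,
      α (p + 1) * mgShooting α σ (p + 1) ≤ 1 / 2 * (α p * mgShooting α σ p) := by
  have hσ₀ := pos_of_mem_mgPositiveShifts hα hσ.1
  have hle := eventually_mgShooting_succ_le_of_isLeast hα hlim hσ
  filter_upwards [hle, (tendsto_add_atTop_nat 1).eventually hle,
    (hlim.const_mul_atTop hσ₀).eventually_ge_atTop 4] with p h₁ h₂ h₄
  refine le_of_mul_le_mul_left ?_ hσ₀
  calc σ * (α (p + 1) * mgShooting α σ (p + 1))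
      = mgShooting α σ p + mgShooting α σ (p + 2) := by rw [mgShooting_add_two]; ring
    _ ≤ 1 / 2 * (4 * mgShooting α σ p) := by linarith
    _ ≤ 1 / 2 * (σ * α p * mgShooting α σ p) := by
      gcongr
      exact mgShooting_nonneg_of_mem hσ.1 p
    _ = σ * (1 / 2 * (α p * mgShooting α σ p)) := by ring

theorem decaysExponentially_mgShooting_of_isLeast (hα : ∀ p, 0 < α (p + 1))
    (hlim : Tendsto α atTop atTop) (hσ : IsLeast (mgPositiveShifts α) σ) :
    DecaysExponentially fun p => (-1) ^ (p + 1) * (α p * mgShooting α σ p) := by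
  refine decaysExponentially_of_eventually_ratio_le (r := 1 / 2) (by norm_num) ?_
  filter_upwards [eventually_mul_mgShooting_succ_le_of_isLeast (hα 0) hlim hσ,
    hlim.eventually_ge_atTop 0] with p hratio hαp
  have hp := mul_nonneg hαp (mgShooting_nonneg_of_mem hσ.1 p)
  have hp' := mul_nonneg (hα p).le (mgShooting_nonneg_of_mem hσ.1 (p + 1))
  simpa only [abs_mul ((-1 : ℝ) ^ _), abs_neg_one_pow, one_mul, abs_of_nonneg hp,
    abs_of_nonneg hp'] using hratio

end PositiveShifts

theorem exists_decaying_solvesMGRecursion {α : ℕ → ℝ} (hα : ∀ p, 0 < α (p + 1))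
    (hlim : Tendsto α atTop atTop) :
    ∃ σ : ℝ, 0 < σ ∧ 1 < σ ^ 2 * (α 1 * α 2) ∧
      ∃ c : ℕ → ℝ, c 1 = α 1 ∧ DecaysExponentially c ∧ SolvesMGRecursion α (fun _ => σ) c := by
  obtain ⟨σ, hσ⟩ := exists_isLeast_mgPositiveShifts hα hlim
  exact ⟨σ, pos_of_mem_mgPositiveShifts (hα 0) hσ.1, one_lt_of_mem_mgPositiveShifts hσ.1, _,
    by simp, decaysExponentially_mgShooting_of_isLeast hα hlim hσ,
    solvesMGRecursion_mgShooting fun p => (hα p).ne'⟩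

section Coefficients

variable {N : ℝ} {m : ℕ} {k1 k2 : ℤ}

theorem alphaMG_pos (hN : N ≠ 0) (hm : m ≠ 0) (hk2 : k2 ≠ 0) (p : ℕ) :
    0 < alphaMG N m k1 k2 p := by
  unfold alphaMG
  positivity

theorem alphaMG_monotone : Monotone (alphaMG N m k1 k2) := fun p q hpq => by
  unfold alphaMG
  gcongr

theorem tendsto_alphaMG_atTop (hN : N ≠ 0) (hm : m ≠ 0) (hk2 : k2 ≠ 0) :
    Tendsto (alphaMG N m k1 k2) atTop atTop := by
  have hm' : (0 : ℝ) < m := by positivity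
  have hsq : Tendsto (fun p : ℕ => ((m : ℝ) * p) ^ 2) atTop atTop :=
    (tendsto_pow_atTop two_ne_zero).comp (tendsto_natCast_atTop_atTop.const_mul_atTop hm')
  have hnumerator := (hsq.const_mul_atTop (show 0 < N ^ 4 by positivity)).atTop_mul_atTop₀
    (tendsto_atTop_add_const_left _ ((k1 : ℝ) ^ 2 + (k2 : ℝ) ^ 2) hsq)
  exact ((tendsto_atTop_add_const_right _ ((k2 : ℝ) ^ 4) hnumerator).const_mul_atTop
    two_pos).atTop_div_const (by positivity)

theorem alphaMG_two_le (hN : N ≠ 0) (hm : m ≠ 0) (hk2 : k2 ≠ 0)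
    (hk : k2 ^ 4 ≤ k1 ^ 2 + k2 ^ 2) (hmk : 8 * (m : ℤ) ^ 2 ≤ k1 ^ 2 + k2 ^ 2) :
    alphaMG N m k1 k2 2 ≤ (12 * N ^ 4 * m ^ 2 + 2) / (m * N ^ 2 * k2 ^ 2) := by
  have hk' : (k2 : ℝ) ^ 4 ≤ k1 ^ 2 + k2 ^ 2 := by exact_mod_cast hk
  have hmk' : ((m : ℝ) * (2 : ℕ)) ^ 2 ≤ (k1 ^ 2 + k2 ^ 2) / 2 := by
    have : 8 * (m : ℝ) ^ 2 ≤ k1 ^ 2 + k2 ^ 2 := by exact_mod_cast hmk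
    push_cast
    linarith
  unfold alphaMG
  set K : ℝ := k1 ^ 2 + k2 ^ 2
  have hK : 0 < K := by positivity
  calc _ ≤ 2 * (N ^ 4 * ((m : ℝ) * (2 : ℕ)) ^ 2 * (K + K / 2) + K) / (m * N ^ 2 * k2 ^ 2 * K) := by
        gcongr
    _ = (12 * N ^ 4 * m ^ 2 + 2) / (m * N ^ 2 * k2 ^ 2) := by
        push_cast
        field_simp
        ring

end Coefficients

theorem mg_nondiffusive_eigenvalues_unbounded_general (N : ℝ) (hN : N ≠ 0)
    (m : ℕ) (hm : m ≠ 0) (k1 k2 : ℤ) (hk2 : k2 ≠ 0)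
    (hk : k2 ^ 4 ≤ k1 ^ 2 + k2 ^ 2) (hmk : 8 * (m : ℤ) ^ 2 ≤ k1 ^ 2 + k2 ^ 2) :
    ∃ σstar : ℝ, 0 < σstar ∧ m * N ^ 2 * k2 ^ 2 / (12 * N ^ 4 * m ^ 2 + 2) ≤ σstar ∧
      ∃ c : ℕ → ℝ, c 1 = alphaMG N m k1 k2 1 ∧ DecaysExponentially c ∧
        SolvesMGRecursion (alphaMG N m k1 k2) (fun _ => σstar) c := by
  have hpos : ∀ p, 0 < alphaMG N m k1 k2 p := alphaMG_pos hN hm hk2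
  obtain ⟨σ, hσ, hlt, hc⟩ := exists_decaying_solvesMGRecursion (fun p => hpos (p + 1))
    (tendsto_alphaMG_atTop hN hm hk2)
  have hone : 1 ≤ σ * alphaMG N m k1 k2 2 := by
    refine (one_lt_sq_iff₀ (mul_pos hσ (hpos 2)).le).1 ?_ |>.le
    calc 1 < σ ^ 2 * (alphaMG N m k1 k2 1 * alphaMG N m k1 k2 2) := hlt
      _ ≤ σ ^ 2 * (alphaMG N m k1 k2 2 * alphaMG N m k1 k2 2) := by
        gcongr
        exacts [(hpos 2).le, alphaMG_monotone one_le_two]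
      _ = (σ * alphaMG N m k1 k2 2) ^ 2 := by ring
  refine ⟨σ, hσ, ?_, hc⟩
  calc m * N ^ 2 * k2 ^ 2 / (12 * N ^ 4 * m ^ 2 + 2)
      = 1 / ((12 * N ^ 4 * m ^ 2 + 2) / (m * N ^ 2 * k2 ^ 2)) := by rw [one_div_div]
    _ ≤ 1 / alphaMG N m k1 k2 2 :=
        one_div_le_one_div_of_le (hpos 2) (alphaMG_two_le hN hm hk2 hk hmk)
    _ ≤ σ := (div_le_iff₀ (hpos 2)).2 hone

theorem eight_mul_sq_le_of_two_mul_le {m j : ℕ} (h : 2 * m ≤ j) :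
    8 * m ^ 2 ≤ (j ^ 2) ^ 2 + j ^ 2 := by
  have hsq : (2 * m) ^ 2 ≤ j ^ 2 := Nat.pow_le_pow_left h 2
  linarith [Nat.le_self_pow two_ne_zero (j ^ 2)]

theorem linear_bound_le_quadratic_bound (N : ℝ) (m j : ℕ) :
    (j : ℝ) * m * N ^ 2 / (24 * N ^ 4 * m ^ 2 + 2) ≤
      m * N ^ 2 * j ^ 2 / (12 * N ^ 4 * m ^ 2 + 2) := by
  have hj : (j : ℝ) ≤ j ^ 2 := by exact_mod_cast Nat.le_self_pow two_ne_zero j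
  calc (j : ℝ) * m * N ^ 2 / (24 * N ^ 4 * m ^ 2 + 2)
      = m * N ^ 2 * j / (24 * N ^ 4 * m ^ 2 + 2) := by ring
    _ ≤ m * N ^ 2 * j ^ 2 / (12 * N ^ 4 * m ^ 2 + 2) := by
      gcongr
      norm_num

/-- **Arbitrarily large unstable eigenvalues for the non-diffusive linearized MG
equation:** for `N > 0`, an integer `m ≥ 1` and every integer `j ≥ 2m`, with frequencies
`k1 = j²`, `k2 = j` there exist `σ_{*,j} > 0` and an exponentially decaying sequence
`(c_p)` with `c_1 = α_1` solving the MG eigenvalue recursion with constant shifts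
`σ_p = σ_{*,j}`, such that `σ_{*,j} ≥ j·mN²/(24N⁴m² + 2)`; in particular `σ_{*,j} → ∞`
as `j → ∞`. -/
theorem mg_nondiffusive_eigenvalues_unbounded (N : ℝ) (hN : 0 < N)
    (m : ℕ) (hm : 1 ≤ m) (j : ℕ) (hj : 2 * m ≤ j) :
    ∃ σstar : ℝ, 0 < σstar ∧
      (j : ℝ) * (m : ℝ) * N ^ 2 / (24 * N ^ 4 * (m : ℝ) ^ 2 + 2) ≤ σstar ∧
      ∃ c : ℕ → ℝ, c 1 = alphaMG N m ((j : ℤ) ^ 2) (j : ℤ) 1 ∧ DecaysExponentially c ∧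
        SolvesMGRecursion (alphaMG N m ((j : ℤ) ^ 2) (j : ℤ)) (fun _ => σstar) c := by
  obtain ⟨σ, hσ, hle, hc⟩ := mg_nondiffusive_eigenvalues_unbounded_general N hN.ne' m (by omega)
    ((j : ℤ) ^ 2) j (by omega) (by nlinarith) (by exact_mod_cast eight_mul_sq_le_of_two_mul_le hj)
  exact ⟨σ, hσ, (linear_bound_le_quadratic_bound N m j).trans (by exact_mod_cast hle), hc⟩
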